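/- Let n and d be positive integers with d ≤ n, and let A = (a_{ij}) be a d × n integer matrix of rank d. In the polynomial ring ℂ[z₁,…,zₙ,w₁,…,wₙ], let I be the ideal generated by the d polynomials f_i = Σ_{j=1}^n a_{ij} z_j w_j (1 ≤ i ≤ d). Then the Krull dimension of the quotient ring ℂ[z₁,…,zₙ,w₁,…,wₙ]/I equals 2n − d. -/

import Mathlib

open MvPolynomial

/-!
Write `z`, `w` for the two groups of variables and `r` for the rank of `A`. The ideal depends only
on the row space of `A`, so it has `r` generators, all of which vanish at the origin. The origin has
height `2n` in affine `2n`-space, so by Krull's height theorem the quotient has dimension at least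
`2n - r`.

Conversely, `zⱼ` is a root of `T² - (zⱼ - wⱼ) T - zⱼ wⱼ`, so the quotient is integral over the
subalgebra generated by the `zⱼ - wⱼ` and the `zⱼ wⱼ`. Modulo the ideal the products `zⱼ wⱼ` span a
space of dimension at most `n - r`, so this subalgebra has at most `2n - r` generators.
-/

open Module

section Integral

theorem ringKrullDim_le_of_isIntegral (R S : Type*) [CommRing R] [CommRing S] [Algebra R S]
    [Algebra.IsIntegral R S] : ringKrullDim S ≤ ringKrullDim R :=
  Order.krullDim_le_of_strictMono (PrimeSpectrum.comap (algebraMap R S)) fun _ _ h ↦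
    Ideal.IsIntegral.comap_lt_comap h

theorem isIntegral_of_sub_eq_of_mul_eq {R S : Type*} [CommRing R] [CommRing S] [Algebra R S]
    {x y : S} {a b : R} (hsub : x - y = algebraMap R S a) (hmul : x * y = algebraMap R S b) :
    IsIntegral R x := by
  refine ⟨Polynomial.X ^ 2 - (Polynomial.C a * Polynomial.X + Polynomial.C b),
    Polynomial.monic_X_pow_sub (Polynomial.degree_linear_le.trans_lt (by norm_num)), ?_⟩
  simp only [Polynomial.eval₂_sub, Polynomial.eval₂_add, Polynomial.eval₂_mul,
    Polynomial.eval₂_X_pow, Polynomial.eval₂_X, Polynomial.eval₂_C, ← hsub, ← hmul]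
  ring

theorem isIntegral_of_adjoin_eq_top_of_sub_mem_of_mul_mem {k T ι : Type*} [CommRing k] [CommRing T]
    [Algebra k T] {x y : ι → T} (hxy : Algebra.adjoin k (Set.range x ∪ Set.range y) = ⊤)
    {D : Subalgebra k T} (hsub : ∀ i, x i - y i ∈ D) (hmul : ∀ i, x i * y i ∈ D) :
    Algebra.IsIntegral D T := by
  have hx (i : ι) : IsIntegral D (x i) :=
    isIntegral_of_sub_eq_of_mul_eq (a := ⟨_, hsub i⟩) (b := ⟨_, hmul i⟩) rfl rfl
  have hy (i : ι) : IsIntegral D (y i) := by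
    simpa using (hx i).sub (isIntegral_algebraMap (x := (⟨_, hsub i⟩ : D)))
  have htop : (integralClosure D T).restrictScalars k = ⊤ := by
    rw [eq_top_iff, ← hxy, Algebra.adjoin_le_iff]
    rintro _ (⟨i, rfl⟩ | ⟨i, rfl⟩)
    exacts [hx i, hy i]
  exact ⟨fun t ↦ (htop ▸ Algebra.mem_top : t ∈ (integralClosure D T).restrictScalars k)⟩

theorem ringKrullDim_adjoin_le_finrank {k T : Type*} [Field k] [CommRing T] [Algebra k T]
    (s : Set T) [FiniteDimensional k (Submodule.span k s)] :
    ringKrullDim (Algebra.adjoin k s) ≤ finrank k (Submodule.span k s) := by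
  obtain ⟨v, -, hv, -⟩ := Submodule.exists_fun_fin_finrank_span_eq k s
  have hadjoin : Algebra.adjoin k s = (aeval (R := k) v).range := by
    rw [← Algebra.adjoin_range_eq_range_aeval, ← Algebra.adjoin_span (R := k) (s := Set.range v),
      hv, Algebra.adjoin_span]
  rw [hadjoin]
  calc ringKrullDim (aeval (R := k) v).range
      ≤ ringKrullDim (MvPolynomial (Fin (finrank k (Submodule.span k s))) k) :=
        ringKrullDim_le_of_surjective (aeval (R := k) v).rangeRestrict.toRingHom
          (aeval (R := k) v).rangeRestrict_surjective
    _ = finrank k (Submodule.span k s) := by simp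

theorem ringKrullDim_le_finrank_span_mul_add_card {k T ι : Type*} [Field k] [CommRing T]
    [Algebra k T] [Fintype ι] {x y : ι → T}
    (hxy : Algebra.adjoin k (Set.range x ∪ Set.range y) = ⊤) :
    ringKrullDim T ≤
      (finrank k (Submodule.span k (Set.range (x * y))) + Fintype.card ι : ℕ) := by
  let s : Set T := Set.range (x * y) ∪ Set.range (x - y)
  have : FiniteDimensional k (Submodule.span k s) :=
    .span_of_finite k ((Set.finite_range _).union (Set.finite_range _))
  have : Algebra.IsIntegral (Algebra.adjoin k s) T :=
    isIntegral_of_adjoin_eq_top_of_sub_mem_of_mul_mem hxy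
      (fun i ↦ Algebra.subset_adjoin (.inr ⟨i, rfl⟩))
      (fun i ↦ Algebra.subset_adjoin (.inl ⟨i, rfl⟩))
  have hfinrank : finrank k (Submodule.span k s) ≤
      finrank k (Submodule.span k (Set.range (x * y))) + Fintype.card ι := by
    rw [Submodule.span_union]
    have : FiniteDimensional k (Submodule.span k (Set.range (x * y))) :=
      .span_of_finite k (Set.finite_range _)
    have : FiniteDimensional k (Submodule.span k (Set.range (x - y))) :=
      .span_of_finite k (Set.finite_range _)
    exact (Submodule.finrank_add_le_finrank_add_finrank _ _).trans
      (Nat.add_le_add_left (finrank_range_le_card _) _)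
  calc ringKrullDim T
      ≤ ringKrullDim (Algebra.adjoin k s) := ringKrullDim_le_of_isIntegral _ _
    _ ≤ finrank k (Submodule.span k s) := ringKrullDim_adjoin_le_finrank s
    _ ≤ _ := by exact_mod_cast hfinrank

end Integral

section Height

theorem isPrime_span_X_image {σ R : Type*} [CommRing R] [IsDomain R] (s : Set σ) :
    (Ideal.span (X '' s : Set (MvPolynomial σ R))).IsPrime := by
  classical
  set I : Ideal (MvPolynomial σ R) := Ideal.span (X '' s)
  let φ : MvPolynomial σ R →ₐ[R] MvPolynomial σ R := aeval fun i ↦ if i ∈ s then 0 else X i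
  have hφ : (Ideal.Quotient.mkₐ R I).comp φ = Ideal.Quotient.mkₐ R I := by
    ext i
    by_cases hi : i ∈ s
    · have hXi : X i ∈ I := Ideal.subset_span ⟨i, hi, rfl⟩
      simp [φ, hi, Ideal.Quotient.eq_zero_iff_mem.mpr hXi]
    · simp [φ, hi]
  have hker : RingHom.ker φ = I := by
    refine le_antisymm (fun p hp ↦ ?_) (Ideal.span_le.mpr ?_)
    · have hp' := DFunLike.congr_fun hφ p
      rw [AlgHom.comp_apply, (RingHom.mem_ker.mp hp : φ p = 0), map_zero] at hp'
      exact Ideal.Quotient.eq_zero_iff_mem.mp hp'.symm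
    · rintro _ ⟨i, hi, rfl⟩
      simp [φ, hi]
  exact hker ▸ RingHom.ker_isPrime φ

theorem card_le_height_span_X_image {σ R : Type*} [CommRing R] [IsDomain R] (s : Finset σ) :
    s.card ≤ (Ideal.span (X '' s : Set (MvPolynomial σ R))).height := by
  classical
  induction s using Finset.induction_on with
  | empty => simp
  | insert i s hi ih =>
    have := isPrime_span_X_image (R := R) (s : Set σ)
    have := isPrime_span_X_image (R := R) ((insert i s : Finset σ) : Set σ)
    have hlt : Ideal.span (X '' s : Set (MvPolynomial σ R)) <
        Ideal.span (X '' (insert i s : Finset σ)) := by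
      refine SetLike.lt_iff_le_and_exists.mpr ⟨Ideal.span_mono (by gcongr; simp),
        X i, Ideal.subset_span ⟨i, by simp, rfl⟩, ?_⟩
      simpa [mem_ideal_span_X_image, support_X, Finsupp.single_apply] using hi
    rw [Finset.card_insert_of_notMem hi, Nat.cast_add, Nat.cast_one]
    exact (add_le_add_left ih 1).trans (Ideal.height_add_one_le_of_lt_of_isPrime hlt)

theorem natCard_le_ringKrullDim_quotient_add_spanFinrank {σ R : Type*} [Finite σ] [CommRing R]
    [IsDomain R] [IsNoetherianRing R] {I : Ideal (MvPolynomial σ R)} (hI : I ≤ idealOfVars σ R) :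
    Nat.card σ ≤ ringKrullDim (MvPolynomial σ R ⧸ I) + I.spanFinrank := by
  cases nonempty_fintype σ
  have : (idealOfVars σ R).IsPrime := by
    simpa using isPrime_span_X_image (R := R) (Set.univ : Set σ)
  have hheight : (Nat.card σ : ℕ∞) ≤ (idealOfVars σ R).height := by
    simpa using card_le_height_span_X_image (R := R) (Finset.univ : Finset σ)
  exact (WithBot.coe_le_coe.mpr hheight).trans (height_le_ringKrullDim_quotient_add_spanFinrank hI)

end Height

section Span

theorem spanFinrank_span_le_spanFinrank {R S M : Type*} [Semiring R] [Semiring S] [AddCommMonoid M]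
    [SMul R S] [Module R M] [Module S M] [IsScalarTower R S M] {N : Submodule R M} (hN : N.FG) :
    (Submodule.span S (N : Set M)).spanFinrank ≤ N.spanFinrank := by
  obtain ⟨s, hs, rfl⟩ := hN.exists_span_finset_card_eq_spanFinrank
  rw [Submodule.span_span_of_tower, ← hs, ← Set.ncard_coe_finset]
  exact Submodule.spanFinrank_span_le_ncard_of_finite s.finite_toSet

theorem spanFinrank_span_image_le_finrank {K S V M : Type*} [DivisionRing K] [Semiring S]
    [SMul K S] [AddCommGroup V] [Module K V] [AddCommMonoid M] [Module K M] [Module S M]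
    [IsScalarTower K S M]
    (f : V →ₗ[K] M) (W : Submodule K V) [FiniteDimensional K W] :
    (Submodule.span S (f '' W)).spanFinrank ≤ finrank K W := by
  have hW : W.FG := (Submodule.fg_iff_finiteDimensional W).mpr inferInstance
  rw [← Submodule.map_coe]
  calc (Submodule.span S (W.map f : Set M)).spanFinrank
      ≤ (W.map f).spanFinrank := spanFinrank_span_le_spanFinrank (hW.map f)
    _ ≤ W.spanFinrank := Submodule.spanFinrank_map_le_of_fg f hW
    _ = finrank K W := by rw [finrank_eq_spanFinrank_of_free, Submodule.spanFinrank_top]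

theorem finrank_span_image_algebraMap {K ι : Type*} (L : Type*) [Field K] [Field L] [Algebra K L]
    [Finite ι] (s : Set (ι → K)) :
    finrank L (Submodule.span L (Pi.algebraMap ι K L '' s)) = finrank K (Submodule.span K s) := by
  obtain ⟨v, -, hv, hli⟩ := Submodule.exists_fun_fin_finrank_span_eq K s
  have hspan : Submodule.span L (Pi.algebraMap ι K L '' s) =
      Submodule.span L (Set.range fun i ↦ algebraMap K L ∘ v i) := by
    conv_lhs => rw [← Submodule.span_span_of_tower K, ← Submodule.map_span, ← hv]
    rw [Submodule.map_span, Submodule.span_span_of_tower, ← Set.range_comp]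
    rfl
  rw [hspan, finrank_span_eq_card (linearIndependent_algebraMap_comp_iff.mpr hli), Fintype.card_fin]

theorem rank_map_algebraMap {K L m n : Type*} [Field K] [Field L] [Algebra K L] [Finite m]
    [Fintype n] (A : Matrix m n K) : (A.map (algebraMap K L)).rank = A.rank := by
  have hrow : Set.range (A.map (algebraMap K L)).row =
      Pi.algebraMap n K L '' Set.range A.row := Set.range_comp (Pi.algebraMap n K L) A.row
  rw [Matrix.rank_eq_finrank_span_row, Matrix.rank_eq_finrank_span_row, hrow,
    finrank_span_image_algebraMap]

end Span

section Comoment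

variable (k σ : Type*) [CommSemiring k] [Fintype σ]

/-- The comoment map of the torus acting on `T*𝔸^σ`, with coordinates `zⱼ = X (Sum.inl j)` and
`wⱼ = X (Sum.inr j)`: it sends `v` to `∑ⱼ vⱼ zⱼ wⱼ`, so the components of the moment map attached to
a matrix `A` are the images of the rows of `A`. -/
noncomputable def comomentMap : (σ → k) →ₗ[k] MvPolynomial (σ ⊕ σ) k :=
  Fintype.linearCombination k fun j ↦ X (Sum.inl j) * X (Sum.inr j)

variable {k σ}

theorem comomentMap_apply (v : σ → k) :
    comomentMap k σ v = ∑ j, C (v j) * X (Sum.inl j) * X (Sum.inr j) := by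
  simp [comomentMap, Fintype.linearCombination_apply, smul_eq_C_mul, mul_assoc]

theorem comomentMap_single [DecidableEq σ] (j : σ) :
    comomentMap k σ (Pi.single j 1) = X (Sum.inl j) * X (Sum.inr j) := by
  simp [comomentMap, Fintype.linearCombination_apply_single]

theorem comomentMap_mem_idealOfVars (v : σ → k) : comomentMap k σ v ∈ idealOfVars (σ ⊕ σ) k := by
  rw [comomentMap_apply]
  exact sum_mem fun j _ ↦ Ideal.mul_mem_left _ _ (Ideal.subset_span ⟨Sum.inr j, rfl⟩)

end Comoment

section Fiber

variable {k σ : Type*} [Field k] [Fintype σ]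

theorem two_mul_card_le_ringKrullDim_quotient_comomentMap_add_finrank (W : Submodule k (σ → k)) :
    ((2 * Fintype.card σ : ℕ) : WithBot ℕ∞) ≤
      ringKrullDim (MvPolynomial (σ ⊕ σ) k ⧸ Ideal.span (comomentMap k σ '' W)) + finrank k W := by
  have hI : Ideal.span (comomentMap k σ '' W) ≤ idealOfVars (σ ⊕ σ) k := by
    rw [Ideal.span_le]
    rintro _ ⟨v, -, rfl⟩
    exact comomentMap_mem_idealOfVars v
  have hgen : (Ideal.span (comomentMap k σ '' W)).spanFinrank ≤ finrank k W :=
    spanFinrank_span_image_le_finrank _ W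
  calc ((2 * Fintype.card σ : ℕ) : WithBot ℕ∞) = (Nat.card (σ ⊕ σ) : ℕ) := by simp [two_mul]
    _ ≤ ringKrullDim (MvPolynomial (σ ⊕ σ) k ⧸ Ideal.span (comomentMap k σ '' W)) +
          ((Ideal.span (comomentMap k σ '' W)).spanFinrank : ℕ) :=
        natCard_le_ringKrullDim_quotient_add_spanFinrank hI
    _ ≤ _ := add_le_add_right (by exact_mod_cast hgen) _

theorem ringKrullDim_quotient_comomentMap_le (W : Submodule k (σ → k)) :
    ringKrullDim (MvPolynomial (σ ⊕ σ) k ⧸ Ideal.span (comomentMap k σ '' W)) ≤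
      (2 * Fintype.card σ - finrank k W : ℕ) := by
  classical
  set I := Ideal.span (comomentMap k σ '' W)
  let π := Ideal.Quotient.mkₐ k I
  let x (j : σ) := π (X (Sum.inl j))
  let y (j : σ) := π (X (Sum.inr j))
  let q := π.toLinearMap ∘ₗ comomentMap k σ
  have hgen : Algebra.adjoin k (Set.range x ∪ Set.range y) = ⊤ := by
    have hX : Sum.elim x y = π ∘ X := by ext (j | j) <;> rfl
    rw [← Set.Sum.elim_range, hX, Set.range_comp, ← AlgHom.map_adjoin, adjoin_range_X,
      Algebra.map_top, AlgHom.range_eq_top]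
    exact Ideal.Quotient.mkₐ_surjective k I
  have hq : Submodule.span k (Set.range (x * y)) = q.range := by
    have : q = Fintype.linearCombination k (x * y) := by
      ext j
      simp [q, x, y, comomentMap_single, Fintype.linearCombination_apply_single]
    rw [this, Fintype.range_linearCombination]
  have hker : W ≤ q.ker := fun v hv ↦
    Ideal.Quotient.eq_zero_iff_mem.mpr (Ideal.subset_span ⟨v, hv, rfl⟩)
  have hrank : finrank k q.range + finrank k W ≤ Fintype.card σ := by
    rw [← finrank_fintype_fun_eq_card k (η := σ), ← q.finrank_range_add_finrank_ker]
    exact Nat.add_le_add_left (Submodule.finrank_mono hker) _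
  refine (ringKrullDim_le_finrank_span_mul_add_card hgen).trans ?_
  rw [hq]
  exact_mod_cast (by lia : finrank k q.range + Fintype.card σ ≤ _)

theorem ringKrullDim_quotient_comomentMap (W : Submodule k (σ → k)) :
    ringKrullDim (MvPolynomial (σ ⊕ σ) k ⧸ Ideal.span (comomentMap k σ '' W)) =
      (2 * Fintype.card σ - finrank k W : ℕ) := by
  have hW : finrank k W ≤ Fintype.card σ := by
    simpa using Submodule.finrank_le W
  refine (ringKrullDim_quotient_comomentMap_le W).antisymm
    ((ENat.WithBot.add_le_add_natCast_right_iff (c := finrank k W)).mp ?_)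
  rw [← Nat.cast_add, Nat.sub_add_cancel (by lia)]
  exact two_mul_card_le_ringKrullDim_quotient_comomentMap_add_finrank W

end Fiber

theorem stmt_0_general {k m σ : Type*} [Field k] [Finite m] [Fintype σ] (A : Matrix m σ k) :
    ringKrullDim (MvPolynomial (σ ⊕ σ) k ⧸ Ideal.span (Set.range fun i : m ↦
      ∑ j, C (A i j) * X (Sum.inl j) * X (Sum.inr j))) =
      ((2 * Fintype.card σ - A.rank : ℕ) : WithBot ℕ∞) := by
  have hspan : Ideal.span (Set.range fun i : m ↦
      ∑ j, C (A i j) * X (Sum.inl j) * X (Sum.inr j)) =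
      Ideal.span (comomentMap k σ '' Submodule.span k (Set.range A.row)) := by
    simp only [← comomentMap_apply]
    rw [← Submodule.map_coe, Submodule.map_span, Ideal.span, Ideal.span,
      Submodule.span_span_of_tower, ← Set.range_comp]
    rfl
  rw [hspan, ringKrullDim_quotient_comomentMap, Matrix.rank_eq_finrank_span_row]

/-- **Lemma 1.** For a `d × n` integer matrix `A` of rank `d` (over `ℚ`), the quotient of
`ℂ[z₁,…,zₙ,w₁,…,wₙ]` by the ideal generated by the `d` polynomials
`fᵢ = Σⱼ aᵢⱼ zⱼ wⱼ` has Krull dimension `2n - d`. -/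
theorem stmt_0 (n d : ℕ) (hd : 0 < d) (hdn : d ≤ n)
    (A : Matrix (Fin d) (Fin n) ℤ)
    (hrank : (A.map (Int.cast : ℤ → ℚ)).rank = d)
    (I : Ideal (MvPolynomial (Fin n ⊕ Fin n) ℂ))
    (hI : I = Ideal.span (Set.range fun i : Fin d =>
      ∑ j : Fin n, (A i j : MvPolynomial (Fin n ⊕ Fin n) ℂ) *
        X (Sum.inl j) * X (Sum.inr j))) :
    ringKrullDim (MvPolynomial (Fin n ⊕ Fin n) ℂ ⧸ I) = ((2 * n - d : ℕ) : WithBot ℕ∞) := by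
  have hrankℂ : (A.map (Int.cast : ℤ → ℂ)).rank = d := by
    simpa [Matrix.map_map, Function.comp_def, hrank] using
      rank_map_algebraMap (L := ℂ) (A.map (Int.cast : ℤ → ℚ))
  have hI' : I = Ideal.span (Set.range fun i : Fin d ↦
      ∑ j, C (A.map (Int.cast : ℤ → ℂ) i j) * X (Sum.inl j) * X (Sum.inr j)) := by
    simp [hI]
  rw [hI', stmt_0_general, hrankℂ, Fintype.card_fin]
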